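/- Let G be a weighted graph with terminal set K of size k, fix a terminal v_k ∈ K, and let 𝒰 be the collection of nonempty subsets U ⊆ K with v_k ∉ U. The number of families X ⊆ 𝒰 with A(X) ≠ ∅ is at most M(k−1), the number of antichains in the power set of the (k−1)-element set K \ {v_k} ordered by inclusion. Consequently, the partition of V into the nonempty sets A(X) has at most M(k−1) classes. -/

import Mathlib

open scoped Classical

/-- A weighted graph with a distinguished embedded set of terminals indexed by `κ`:
a finite vertex type `V`, an embedding `ι : κ ↪ V` of the terminals, and a symmetric
nonnegative capacity function `c` on pairs of vertices. -/
structure WeightedGraph (κ : Type) where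
  V : Type
  [fintypeV : Fintype V]
  ι : κ ↪ V
  c : V → V → ℝ
  symm : ∀ u v, c u v = c v u
  nonneg : ∀ u v, 0 ≤ c u v

namespace WeightedGraph

variable {κ : Type}

instance (G : WeightedGraph κ) : Fintype G.V := G.fintypeV

/-- The cut function `h_G(A) = Σ_{u ∈ A, v ∉ A} c(u,v)`. -/
noncomputable def cutval (G : WeightedGraph κ) (A : Finset G.V) : ℝ :=
  ∑ u ∈ A, ∑ v ∈ Aᶜ, G.c u v

/-- The vertex sets realizing the terminal partition `(U, K \ U)`. -/
noncomputable def cutSets (G : WeightedGraph κ) (U : Finset κ) : Finset (Finset G.V) :=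
  Finset.univ.filter fun A => ∀ x : κ, G.ι x ∈ A ↔ x ∈ U

theorem cutSets_nonempty (G : WeightedGraph κ) (U : Finset κ) : (G.cutSets U).Nonempty := by
  refine ⟨U.image G.ι, ?_⟩
  simp [cutSets, Finset.mem_image, G.ι.injective.eq_iff]

/-- The terminal cut function `h_K^G(U) = min { h_G(A) : A ∩ K = U }`. -/
noncomputable def termCut (G : WeightedGraph κ) (U : Finset κ) : ℝ :=
  (G.cutSets U).inf' (G.cutSets_nonempty U) G.cutval

/-- `H` is a mimicking network for `(G, K)`: all minimum terminal cut values agree. -/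
def IsMimicking (G H : WeightedGraph κ) : Prop :=
  ∀ U : Finset κ, H.termCut U = G.termCut U

/-- `H` is a quotient (contraction) of `G` along the surjection `f`: terminals map to
terminals, and capacities between distinct classes are sums of the original capacities. -/
def IsQuotient (G H : WeightedGraph κ) (f : G.V → H.V) : Prop :=
  Function.Surjective f ∧ (∀ x : κ, f (G.ι x) = H.ι x) ∧
    ∀ y z : H.V, y ≠ z →
      H.c y z = ∑ u ∈ Finset.univ.filter (fun u => f u = y),
        ∑ v ∈ Finset.univ.filter (fun v => f v = z), G.c u v

end WeightedGraph

/-- `A` is a minimum-cardinality minimizer realizing the minimum terminal cut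
`h_K^G(U)`: it induces the terminal partition `(U, K \ U)`, achieves the minimum cut
value, and has minimum cardinality among all such minimizers. -/
def WeightedGraph.IsMinCutSet {κ : Type} (G : WeightedGraph κ) (U : Finset κ)
    (A : Finset G.V) : Prop :=
  (∀ x : κ, G.ι x ∈ A ↔ x ∈ U) ∧ G.cutval A = G.termCut U ∧
    ∀ B : Finset G.V, (∀ x : κ, G.ι x ∈ B ↔ x ∈ U) → G.cutval B = G.termCut U →
      A.card ≤ B.card

/-- `𝒰`: the collection of nonempty subsets `U ⊆ K` not containing the fixed
terminal `t` (= `v_k`). -/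
noncomputable def terminalSubsets (κ : Type) [Fintype κ] (t : κ) : Finset (Finset κ) :=
  Finset.univ.filter fun U : Finset κ => U.Nonempty ∧ t ∉ U

/-- `A(X) = (∩_{Z ∈ X} S(Z)) ∩ (∩_{W ∈ 𝒰 \ X} (V \ S(W)))`, the cluster of vertices
lying inside `S(Z)` exactly for the members `Z` of the family `X ⊆ 𝒰`. -/
noncomputable def region {κ : Type} [Fintype κ] (G : WeightedGraph κ) (t : κ)
    (S : Finset κ → Finset G.V) (X : Finset (Finset κ)) : Finset G.V :=
  Finset.univ.filter fun v : G.V =>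
    (∀ Z ∈ X, v ∈ S Z) ∧ ∀ W ∈ terminalSubsets κ t \ X, v ∉ S W

/-- The `n`-th Dedekind number: the number of antichains in the power set of an
`n`-element set ordered by inclusion. -/
noncomputable def dedekind (n : ℕ) : ℕ :=
  Nat.card {A : Finset (Finset (Fin n)) // IsAntichain (· ⊆ ·) (A : Set (Finset (Fin n)))}

theorem cutval_eq_ite {κ : Type} (G : WeightedGraph κ) (A : Finset G.V) :
    G.cutval A = ∑ u, ∑ v, if u ∈ A ∧ v ∉ A then G.c u v else 0 := by
  unfold WeightedGraph.cutval
  rw [← Finset.sum_filter_add_sum_filter_not (Finset.univ : Finset G.V) (· ∈ A)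
    (fun u => ∑ v, if u ∈ A ∧ v ∉ A then G.c u v else 0)]
  have h2 : ∑ u ∈ Finset.univ.filter (fun u => ¬ u ∈ A),
      (∑ v, if u ∈ A ∧ v ∉ A then G.c u v else 0) = 0 := by
    apply Finset.sum_eq_zero
    intro u hu
    simp only [Finset.mem_filter, Finset.mem_univ, true_and] at hu
    simp [hu]
  rw [h2, add_zero]
  have h3 : Finset.univ.filter (fun u => u ∈ A) = A := by ext; simp
  rw [h3]
  apply Finset.sum_congr rfl
  intro u hu
  have h4 : Aᶜ = Finset.univ.filter (fun v => v ∉ A) := by ext; simp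
  rw [h4, Finset.sum_filter]
  simp [hu]

theorem cutval_submod {κ : Type} (G : WeightedGraph κ) (A B : Finset G.V) :
    G.cutval (A ∩ B) + G.cutval (A ∪ B) ≤ G.cutval A + G.cutval B := by
  simp only [cutval_eq_ite, ← Finset.sum_add_distrib]
  refine Finset.sum_le_sum fun u _ => Finset.sum_le_sum fun v _ => ?_
  have := G.nonneg u v
  by_cases h1 : u ∈ A <;> by_cases h2 : u ∈ B <;> by_cases h3 : v ∈ A <;>
    by_cases h4 : v ∈ B <;> simp [h1, h2, h3, h4, this]

theorem termCut_le {κ : Type} (G : WeightedGraph κ) (U : Finset κ) (A : Finset G.V)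
    (h : ∀ x : κ, G.ι x ∈ A ↔ x ∈ U) : G.termCut U ≤ G.cutval A :=
  Finset.inf'_le _ (by simpa [WeightedGraph.cutSets] using h)

theorem minCut_mono {κ : Type} (G : WeightedGraph κ) {U W : Finset κ} {A B : Finset G.V}
    (hA : G.IsMinCutSet U A) (hB : G.IsMinCutSet W B) (h : U ⊆ W) : A ⊆ B := by
  obtain ⟨a1, a2, a3⟩ := hA
  obtain ⟨b1, b2, b3⟩ := hB
  have hi : ∀ x : κ, G.ι x ∈ A ∩ B ↔ x ∈ U := fun x => by
    rw [Finset.mem_inter, a1, b1]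
    exact ⟨fun hx => hx.1, fun hx => ⟨hx, h hx⟩⟩
  have hu : ∀ x : κ, G.ι x ∈ A ∪ B ↔ x ∈ W := fun x => by
    rw [Finset.mem_union, a1, b1]
    exact ⟨fun hx => hx.elim (fun k => h k) id, Or.inr⟩
  have l1 := termCut_le G U _ hi
  have l2 := termCut_le G W _ hu
  have l3 := cutval_submod G A B
  have l4 := a3 (A ∩ B) hi (by linarith)
  have l5 := Finset.eq_of_subset_of_card_le Finset.inter_subset_left l4
  exact Finset.inter_eq_left.mp l5

theorem upset_count {κ : Type} [Fintype κ] (t : κ) (F : Finset (Finset (Finset κ)))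
    (h1 : ∀ X ∈ F, X ⊆ terminalSubsets κ t)
    (h2 : ∀ X ∈ F, ∀ Z ∈ X, ∀ W ∈ terminalSubsets κ t, Z ⊆ W → W ∈ X) :
    F.card ≤ dedekind (Fintype.card κ - 1) := by
  have hc : Fintype.card {x : κ // x ≠ t} = Fintype.card κ - 1 := by
    simp
  let e : {x : κ // x ≠ t} ≃ Fin (Fintype.card κ - 1) := Fintype.equivFinOfCardEq hc
  let g : Finset κ → Finset (Fin (Fintype.card κ - 1)) := fun Z =>
    Finset.univ.filter fun i => (e.symm i).1 ∈ Z
  have hg : ∀ Z W : Finset κ, t ∉ Z → (g Z ⊆ g W ↔ Z ⊆ W) := by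
    intro Z W hZ
    constructor
    · intro h x hx
      have hxt : x ≠ t := fun hh => hZ (hh ▸ hx)
      have := @h (e ⟨x, hxt⟩) (by simp [g, hx])
      simpa [g] using this
    · intro h i hi
      simp only [g, Finset.mem_filter, Finset.mem_univ, true_and] at hi ⊢
      exact h hi
  let m : Finset (Finset κ) → Finset (Finset (Fin (Fintype.card κ - 1))) := fun X =>
    (X.filter fun Z => Minimal (· ∈ X) Z).image g
  have ht : ∀ X ∈ F, ∀ Z ∈ X, t ∉ Z := by
    intro X hX Z hZ
    have := h1 X hX hZ
    simp only [terminalSubsets, Finset.mem_filter] at this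
    exact this.2.2
  have hm : ∀ X ∈ F, IsAntichain (· ⊆ ·) (m X : Set (Finset (Fin (Fintype.card κ - 1)))) := by
    intro X hX a ha b hb hab hle
    simp only [m, Finset.coe_image, Set.mem_image, Finset.coe_filter, Set.mem_setOf_eq] at ha hb
    obtain ⟨Z, ⟨hZ, hZm⟩, rfl⟩ := ha
    obtain ⟨W, ⟨hW, hWm⟩, rfl⟩ := hb
    have hZW := (hg Z W (ht X hX Z hZ)).1 hle
    exact hab (congrArg g (le_antisymm hZW (hWm.2 hZ hZW)))
  have hrec : ∀ X ∈ F, ∀ Z, Z ∈ X ↔ Z ∈ terminalSubsets κ t ∧ ∃ a ∈ m X, a ⊆ g Z := by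
    intro X hX Z
    constructor
    · intro hZ
      refine ⟨h1 X hX hZ, ?_⟩
      obtain ⟨M, hMZ, hM⟩ := Finset.exists_le_minimal X hZ
      exact ⟨g M, Finset.mem_image.2 ⟨M, Finset.mem_filter.2 ⟨hM.1, hM⟩, rfl⟩,
        (hg M Z (ht X hX M hM.1)).2 hMZ⟩
    · rintro ⟨hZ, a, ha, haZ⟩
      obtain ⟨M, hM, rfl⟩ := Finset.mem_image.1 ha
      have hMX := (Finset.mem_filter.1 hM).1
      exact h2 X hX M hMX Z hZ ((hg M Z (ht X hX M hMX)).1 haZ)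
  unfold dedekind
  have hF : F.card = Nat.card {X // X ∈ F} := by simp
  rw [hF]
  refine Nat.card_le_card_of_injective
    (fun X : {X // X ∈ F} => ⟨m X.1, hm X.1 X.2⟩) ?_
  rintro ⟨X, hX⟩ ⟨Y, hY⟩ hXY
  have hXY' : m X = m Y := congrArg Subtype.val hXY
  apply Subtype.ext
  ext Z
  rw [hrec X hX, hrec Y hY, hXY']

/-- the number of families `X ⊆ 𝒰` with `A(X) ≠ ∅` is at most the
Dedekind number `M(k-1)`; consequently the partition of `V` into nonempty regions
`A(X)` has at most `M(k-1)` classes. -/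
theorem region_count_le_dedekind {κ : Type} [Fintype κ] (G : WeightedGraph κ)
    (t : κ) (S : Finset κ → Finset G.V)
    (hS : ∀ U ∈ terminalSubsets κ t, G.IsMinCutSet U (S U)) :
    (Finset.univ.filter fun X : Finset (Finset κ) =>
        X ⊆ terminalSubsets κ t ∧ (region G t S X).Nonempty).card
      ≤ dedekind (Fintype.card κ - 1) ∧
    ((Finset.univ.filter fun X : Finset (Finset κ) =>
        X ⊆ terminalSubsets κ t ∧ (region G t S X).Nonempty).image
          (region G t S)).card ≤ dedekind (Fintype.card κ - 1) := by
  have key : (Finset.univ.filter fun X : Finset (Finset κ) =>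
        X ⊆ terminalSubsets κ t ∧ (region G t S X).Nonempty).card
      ≤ dedekind (Fintype.card κ - 1) := by
    apply upset_count t
    · intro X hX
      exact (Finset.mem_filter.1 hX).2.1
    · intro X hX Z hZ W hW hZW
      obtain ⟨hXs, v, hv⟩ := (Finset.mem_filter.1 hX).2
      obtain ⟨_, hv1, hv2⟩ := Finset.mem_filter.1 hv
      by_contra hWX
      exact hv2 W (Finset.mem_sdiff.2 ⟨hW, hWX⟩)
        (minCut_mono G (hS Z (hXs hZ)) (hS W hW) hZW (hv1 Z hZ))
  exact ⟨key, Finset.card_image_le.trans key⟩
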